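/- For every integer n ≤ −1 and every natural number l with (l : ℤ) > −n, one has K n l = 0. -/

import Mathlib

/-- The Bernoulli–Euler (zigzag, up-down) numbers: `A 0 = 1`, `A 1 = 1`, and
`2 * A (n+1) = ∑ k in range (n+1), (n.choose k) * A k * A (n-k)`. -/
def A : ℕ → ℕ
  | 0 => 1
  | 1 => 1
  | n + 2 =>
      (∑ k ∈ (Finset.range (n + 2)).attach,
        Nat.choose (n + 1) k.1 * A k.1 * A (n + 1 - k.1)) / 2
decreasing_by
  · have := Finset.mem_range.mp k.2; omega
  · have := Finset.mem_range.mp k.2; omega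

/-- `K n l` : number of connected components of the space of very nice
M-morsifications of the multiboundary singularity `B_n^l`, extended by the
recurrence `K n (l+1) = K (n+2) l − (n+2)·l·K (n+2) (l−1)` for `l ≥ 1`,
with `K n 0 = A (n-1)` for `n ≥ 1`, `K n 0 = 0` for `n ≤ 0`,
and `K n 1 = K (n+2) 0`. -/
def K : ℤ → ℕ → ℤ
  | n, 0 => if 1 ≤ n then (A (n - 1).toNat : ℤ) else 0
  | n, 1 => K (n + 2) 0
  | n, (l + 2) => K (n + 2) (l + 1) - (n + 2) * (l + 1) * K (n + 2) l

open Polynomial in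
/-- Rescaled Meixner–Pollaczek polynomials. -/
noncomputable def RR (n : ℚ) : ℕ → ℚ[X]
  | 0 => 1
  | 1 => X
  | l + 2 => X * RR n (l + 1) - C (((l : ℚ) + 1) * (l + n + 2)) * RR n l

open Polynomial in
theorem RR_low (n : ℚ) : ∀ l : ℕ, RR n (l + 2) =
    RR (n + 2) (l + 2) + C (((l : ℚ) + 2) * (l + 1)) * RR (n + 2) l
  | 0 => by
    simp only [RR, map_mul, map_add, map_one, map_ofNat, map_natCast]
    push_cast
    ring
  | 1 => by
    simp only [RR, map_mul, map_add, map_one, map_ofNat, map_natCast]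
    push_cast
    ring
  | l + 2 => by
    have h1 := RR_low n (l + 1)
    have h0 := RR_low n l
    have e1 : RR n (l + 2 + 2) = X * RR n (l + 1 + 2)
        - C ((((l + 2 : ℕ) : ℚ) + 1) * ((l + 2 : ℕ) + n + 2)) * RR n (l + 2) := by
      rw [RR]
    have e2 : RR (n + 2) (l + 2 + 2) = X * RR (n + 2) (l + 1 + 2)
        - C ((((l + 2 : ℕ) : ℚ) + 1) * ((l + 2 : ℕ) + (n + 2) + 2)) * RR (n + 2) (l + 2) := by
      rw [RR]
    have e3 : RR (n + 2) (l + 2) = X * RR (n + 2) (l + 1)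
        - C (((l : ℚ) + 1) * (l + (n + 2) + 2)) * RR (n + 2) l := by
      rw [RR]
    rw [e1, e2, h1, h0]
    simp only [map_mul, map_add, map_one, map_ofNat, map_natCast] at *
    push_cast at *
    linear_combination (-((l : ℚ[X]) + 3) * (l + 2)) * e3

open Polynomial in
theorem RR_up (n : ℚ) (l : ℕ) : RR n (l + 2) =
    X * RR (n + 2) (l + 1) - C ((n + 2) * ((l : ℚ) + 1)) * RR (n + 2) l := by
  rw [RR_low, RR]
  simp only [map_mul, map_add, map_one, map_ofNat, map_natCast]
  ring

open Polynomial in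
theorem RR_quad (n : ℚ) (l : ℕ) : (X ^ 2 + C ((n + 2) ^ 2)) * RR (n + 2) l =
    X * RR n (l + 1) + C ((n + 2) * l + (n + 2) ^ 2) * RR n l := by
  match l with
  | 0 =>
    simp only [RR, map_mul, map_add, map_one, map_ofNat, map_natCast, map_pow]
    push_cast
    ring
  | 1 =>
    simp only [RR, map_mul, map_add, map_one, map_ofNat, map_natCast, map_pow]
    push_cast
    simp
    ring
  | l + 2 =>
    have h1 := RR_up n (l + 1)
    have h2 := RR_up n l
    have h3 := RR_low n l
    simp only [map_mul, map_add, map_one, map_ofNat, map_natCast, map_pow] at *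
    push_cast at *
    rw [show l + 2 + 1 = l + 1 + 2 from rfl, h1]
    rw [show l + 1 + 1 = l + 2 from rfl]
    linear_combination (C n + 2) ^ 2 * (-h3) - (C n + 2) * (l + 2) * h2

noncomputable def PD : Module.End ℚ (PowerSeries ℚ) :=
  (PowerSeries.derivative ℚ).toLinearMap

noncomputable def Phi (S : PowerSeries ℚ) (f : Polynomial ℚ) : PowerSeries ℚ :=
  (Polynomial.aeval PD f) S

theorem Phi_add (S f g) : Phi S (f + g) = Phi S f + Phi S g := by simp [Phi]
theorem Phi_sub (S f g) : Phi S (f - g) = Phi S f - Phi S g := by simp [Phi]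
theorem Phi_C (S a f) : Phi S (Polynomial.C a * f) = a • Phi S f := by
  simp [Phi]
theorem Phi_X (S f) : Phi S (Polynomial.X * f) = PD (Phi S f) := by simp [Phi]
theorem Phi_one (S) : Phi S 1 = S := by simp [Phi]

theorem PD_mul (f g : PowerSeries ℚ) : PD (f * g) = f * PD g + g * PD f := by
  simp [PD]

theorem PD_pow (f : PowerSeries ℚ) (n : ℕ) : PD (f ^ (n + 1)) = ((n : ℚ) + 1) • (f ^ n * PD f) := by
  simp only [PD, Derivation.coeFn_coe, Derivation.leibniz_pow, PowerSeries.smul_eq_C_mul]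
  simp
  
theorem coeff_PD (f : PowerSeries ℚ) (n : ℕ) :
    PowerSeries.coeff n (PD f) = PowerSeries.coeff (n + 1) f * (n + 1) := by
  simp [PD, PowerSeries.coeff_derivative]

theorem Phi_X_pow (S f) (k : ℕ) : Phi S (Polynomial.X ^ k * f) = (PD ^ k) (Phi S f) := by
  simp [Phi]

theorem coeff_PD_pow (k : ℕ) : ∀ f : PowerSeries ℚ,
    PowerSeries.coeff 0 ((PD ^ k) f) = k.factorial * PowerSeries.coeff k f := by
  induction k with
  | zero => intro f; simp
  | succ k ih =>
    intro f
    rw [pow_succ, Module.End.mul_apply, ih, coeff_PD, Nat.factorial_succ]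
    push_cast; ring

section umbral
variable (c : ℚ) (T S : PowerSeries ℚ)

theorem PD_one : PD 1 = 0 := by simp [PD]

theorem Phi_RR (hT : PD T = 1 + T ^ 2) (hS : PD S = c • (T * S)) : ∀ l : ℕ,
    Phi S (RR (c - 2) l) = (∏ i ∈ Finset.range l, (c + i)) • (T ^ l * S)
  | 0 => by simp [RR, Phi_one]
  | 1 => by
    have : (RR (c - 2) 1) = Polynomial.X * 1 := by simp [RR]
    rw [this, Phi_X, Phi_one, hS]; simp
  | l + 2 => by
    rw [RR, Phi_sub, Phi_X, Phi_C, Phi_RR hT hS (l + 1), Phi_RR hT hS l, map_smul, PD_mul, PD_pow,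
      hT, hS, Finset.prod_range_succ _ (l + 1), Finset.prod_range_succ _ l]
    simp only [PowerSeries.smul_eq_C_mul, map_mul, map_add, map_one, map_sub, map_natCast,
      map_ofNat]
    push_cast
    ring

theorem vanish (hT : PD T = 1 + T ^ 2) (hS : PD S = c • (T * S))
    (hT0 : PowerSeries.coeff 0 T = 0) (k l : ℕ) (hkl : k < l) :
    PowerSeries.coeff 0 (Phi S (Polynomial.X ^ k * RR (c - 2) l)) = 0 := by
  rw [Phi_X_pow, coeff_PD_pow, Phi_RR c T S hT hS]
  have h1 : (PowerSeries.X : PowerSeries ℚ) ∣ T := by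
    rw [PowerSeries.X_dvd_iff]; simpa using hT0
  have h2 : (PowerSeries.X : PowerSeries ℚ) ^ l ∣ T ^ l * S :=
    Dvd.dvd.mul_right (pow_dvd_pow_of_dvd h1 l) S
  rw [PowerSeries.X_pow_dvd_iff] at h2
  simp [h2 k hkl]

theorem shift (hT : PD T = 1 + T ^ 2) (hS : PD S = c • (T * S))
    (hT0 : PowerSeries.coeff 0 T = 0) (k l : ℕ) (hkl : k < l) :
    PowerSeries.coeff 0 (Phi S (Polynomial.X ^ (k + 2) * RR c l)) =
      - c ^ 2 * PowerSeries.coeff 0 (Phi S (Polynomial.X ^ k * RR c l)) := by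
  have h := RR_quad (c - 2) l
  rw [sub_add_cancel] at h
  have e : Polynomial.X ^ (k + 2) * RR c l + Polynomial.C (c ^ 2) * (Polynomial.X ^ k * RR c l)
      = Polynomial.X ^ (k + 1) * RR (c - 2) (l + 1)
        + Polynomial.C (c * l + c ^ 2) * (Polynomial.X ^ k * RR (c - 2) l) := by
    linear_combination Polynomial.X ^ k * h
  have e2 := congrArg (fun f => PowerSeries.coeff 0 (Phi S f)) e
  simp only [Phi_add, Phi_C] at e2
  simp only [map_add, map_smul] at e2
  rw [vanish c T S hT hS hT0 _ _ hkl, vanish c T S hT hS hT0 (k + 1) (l + 1) (by omega)] at e2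
  simp only [smul_eq_mul] at e2
  linarith

theorem shift_iter (hT : PD T = 1 + T ^ 2) (hS : PD S = c • (T * S))
    (hT0 : PowerSeries.coeff 0 T = 0) (e l : ℕ) : ∀ m : ℕ, e + 2 * m ≤ l + 1 →
    PowerSeries.coeff 0 (Phi S (Polynomial.X ^ (e + 2 * m) * RR c l)) =
      (- c ^ 2) ^ m * PowerSeries.coeff 0 (Phi S (Polynomial.X ^ e * RR c l))
  | 0 => by simp
  | m + 1 => by
    intro h
    rw [show e + 2 * (m + 1) = e + 2 * m + 2 by ring, shift c T S hT hS hT0 _ _ (by omega),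
      shift_iter hT hS hT0 e l m (by omega)]
    ring

theorem lower (hT : PD T = 1 + T ^ 2) (hS : PD S = c • (T * S))
    (hT0 : PowerSeries.coeff 0 T = 0) (e : ℕ) (he : e < 2) : ∀ m : ℕ,
    PowerSeries.coeff 0 (Phi S (Polynomial.X ^ e * RR c (e + 2 * m))) =
      (-1) ^ m * ((e + 2 * m).factorial : ℚ) *
        PowerSeries.coeff 0 (Phi S (Polynomial.X ^ e * RR c e))
  | 0 => by interval_cases e <;> simp
  | m + 1 => by
    have h := RR_low (c - 2) (e + 2 * m)
    rw [sub_add_cancel] at h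
    have h' : Polynomial.X ^ e * RR (c - 2) (e + 2 * m + 2) =
      Polynomial.X ^ e * RR c (e + 2 * m + 2) +
      Polynomial.C ((((e + 2 * m : ℕ) : ℚ) + 2) * ((e + 2 * m : ℕ) + 1)) *
        (Polynomial.X ^ e * RR c (e + 2 * m)) := by
      linear_combination Polynomial.X ^ e * h
    have e2 := congrArg (fun f => PowerSeries.coeff 0 (Phi S f)) h'
    simp only [Phi_add, Phi_C, map_add, map_smul] at e2
    rw [vanish c T S hT hS hT0 _ _ (by omega), lower hT hS hT0 e he m] at e2
    rw [show e + 2 * (m + 1) = e + 2 * m + 1 + 1 by ring, Nat.factorial_succ, Nat.factorial_succ]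
    simp only [smul_eq_mul] at e2
    push_cast at *
    rw [pow_succ]
    linear_combination -e2

theorem diag (hT : PD T = 1 + T ^ 2) (hS : PD S = c • (T * S))
    (hT0 : PowerSeries.coeff 0 T = 0) (hS0 : PowerSeries.coeff 0 S = 1) (l : ℕ) :
    PowerSeries.coeff 0 (Phi S (Polynomial.X ^ l * RR c l)) = c ^ l * l.factorial := by
  have key : ∀ e : ℕ, e < 2 → PowerSeries.coeff 0 (Phi S (Polynomial.X ^ e * RR c e)) = c ^ e := by
    intro e he
    interval_cases e
    · simpa [RR, Phi_one] using hS0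
    · have : (Polynomial.X ^ 1 * RR c 1) = Polynomial.X * (Polynomial.X * 1) := by simp [RR]
      rw [this, Phi_X, Phi_X, Phi_one, hS, map_smul, PD_mul, hT, hS]
      simp at hS0 hT0
      simp [hS0, hT0]
  obtain ⟨e, m, he, rfl⟩ : ∃ e m, e < 2 ∧ l = e + 2 * m :=
    ⟨l % 2, l / 2, Nat.mod_lt _ (by norm_num), by omega⟩
  rw [shift_iter c T S hT hS hT0 e _ m (by omega), lower c T S hT hS hT0 e he, key e he, pow_add,
    pow_mul, neg_pow]
  have : ((-1 : ℚ) ^ m) * (-1) ^ m = 1 := by rw [← mul_pow]; simp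
  linear_combination ((c ^ 2) ^ m * c ^ e * (e + 2 * m).factorial) * this

theorem K_eq_umbral (a : ℕ)
    (hmom : ∀ j : ℕ, (2 * j).factorial * PowerSeries.coeff (2 * j) S = (A (a + 2 * j) : ℚ)) :
    ∀ (l j : ℕ), (K ((a : ℤ) + 1 + 2 * j) l : ℚ) =
      PowerSeries.coeff 0 (Phi S (Polynomial.X ^ (2 * j + l) * RR ((a : ℚ) + 1 + 2 * j) l))
  | 0, j => by
    have : ((a : ℤ) + 1 + 2 * j - 1).toNat = a + 2 * j := by omega
    rw [K, if_pos (by omega), this, Phi_X_pow, coeff_PD_pow, RR, Phi_one, add_zero, hmom]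
    simp
  | 1, j => by
    have h := K_eq_umbral a hmom 0 (j + 1)
    rw [K, show (a : ℤ) + 1 + 2 * j + 2 = (a : ℤ) + 1 + 2 * ((j + 1 : ℕ) : ℤ) by push_cast; ring, h]
    simp only [RR]
    congr 2
    ring
  | l + 2, j => by
    have h := K_eq_umbral a hmom l (j + 1)
    have h1 := K_eq_umbral a hmom (l + 1) (j + 1)
    rw [K]
    have e : (a : ℤ) + 1 + 2 * j + 2 = (a : ℤ) + 1 + 2 * ((j + 1 : ℕ) : ℤ) := by push_cast; ring
    have e' : (a : ℚ) + 1 + 2 * j + 2 = (a : ℚ) + 1 + 2 * ((j + 1 : ℕ) : ℚ) := by push_cast; ring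
    rw [RR_up, e, e']
    rw [Int.cast_sub, Int.cast_mul, h, h1, mul_sub, Phi_sub, map_sub]
    congr 1
    · congr 2; ring
    · rw [mul_left_comm, Phi_C, map_smul, smul_eq_mul]
      congr 1
      · push_cast; ring
      · congr 2; ring

end umbral

theorem sum_even (N : ℕ) (hN : N ≠ 0) (f : ℕ → ℕ) :
    2 ∣ ∑ k ∈ Finset.range (N + 1), N.choose k * f k * f (N - k) := by
  rw [← ZMod.natCast_eq_zero_iff]
  push_cast
  refine Finset.sum_involution (fun k _ => N - k) ?_ ?_ ?_ ?_
  · intro k hk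
    have hk' : k ≤ N := by simpa [Nat.lt_succ_iff] using hk
    rw [Nat.choose_symm hk', Nat.sub_sub_self hk']
    rw [mul_assoc, mul_assoc, mul_comm (f (N - k) : ZMod 2)]
    exact CharTwo.add_self_eq_zero _
  · intro k hk hne heq
    apply hne
    have hk' : k ≤ N := by simpa [Nat.lt_succ_iff] using hk
    have : N = 2 * k := by omega
    have h2 : ((N.choose k : ℕ) : ZMod 2) = 0 := by
      rw [ZMod.natCast_eq_zero_iff, this]
      exact Nat.two_dvd_centralBinom_of_one_le (by omega)
    rw [h2]; simp
  · intro k hk; simp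
  · intro k hk
    have hk' : k ≤ N := by simpa [Nat.lt_succ_iff] using hk
    exact Nat.sub_sub_self hk'

theorem A_rec (n : ℕ) : 2 * A (n + 2) =
    ∑ k ∈ Finset.range (n + 2), (n + 1).choose k * A k * A (n + 1 - k) := by
  have h := sum_even (n + 1) (by omega) A
  rw [A, Finset.sum_attach (Finset.range (n + 2))
    (fun k => (n + 1).choose k * A k * A (n + 1 - k))]
  exact Nat.mul_div_cancel' h

noncomputable def YY : PowerSeries ℚ := PowerSeries.mk fun n => (A n : ℚ) / n.factorial

theorem YY_ode : (2 : ℚ) • PD YY = 1 + YY ^ 2 := by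
  ext n
  rw [map_smul, coeff_PD, map_add, sq, PowerSeries.coeff_mul,
    Finset.Nat.sum_antidiagonal_eq_sum_range_succ_mk]
  match n with
  | 0 => simp [YY, A]; norm_num
  | n + 1 =>
    have h := congrArg (Nat.cast (R := ℚ)) (A_rec n)
    push_cast at h
    have hf : ((n + 1).factorial : ℚ) ≠ 0 := by positivity
    have hs : ∑ k ∈ Finset.range (n + 2),
        ((n + 1).choose k : ℚ) * A k * A (n + 1 - k) = (n + 1).factorial *
        ∑ k ∈ Finset.range (n + 2), ((A k : ℚ) / k.factorial) *
          (A (n + 1 - k) / (n + 1 - k).factorial) := by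
      rw [Finset.mul_sum]
      refine Finset.sum_congr rfl fun k hk => ?_
      rw [Nat.cast_choose ℚ (by simp at hk; omega)]
      have h1 : (k.factorial : ℚ) ≠ 0 := by positivity
      have h2 : ((n + 1 - k).factorial : ℚ) ≠ 0 := by positivity
      field_simp
    rw [hs] at h
    simp only [YY, PowerSeries.coeff_mk, PowerSeries.coeff_one, smul_eq_mul]
    rw [if_neg (by omega), zero_add]
    apply mul_left_cancel₀ hf
    rw [← h, Nat.factorial_succ (n + 1)]
    push_cast
    have h3 : ((n : ℚ) + 1 + 1) ≠ 0 := by positivity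
    field_simp

noncomputable def YB : PowerSeries ℚ := PowerSeries.mk fun n => (-1) ^ n * ((A n : ℚ) / n.factorial)

theorem YB_eq : YB = PowerSeries.rescale (-1) YY := by
  ext n; simp [YB, YY]

theorem YB_ode : (2 : ℚ) • PD YB = - (1 + YB ^ 2) := by
  have h := congrArg (PowerSeries.rescale (-1 : ℚ)) YY_ode
  rw [map_add, map_pow, ← YB_eq, map_one] at h
  rw [← h]
  ext n
  simp [coeff_PD, YB, YY, pow_succ]
  ring

theorem lin_ode_zero (W G : PowerSeries ℚ) (h : PD W = G * W) (h0 : PowerSeries.coeff 0 W = 0) :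
    W = 0 := by
  have : ∀ n, ∀ m ≤ n, PowerSeries.coeff m W = 0 := by
    intro n
    induction n with
    | zero => intro m hm; obtain rfl : m = 0 := by omega
              exact h0
    | succ n ih =>
      intro m hm
      rcases Nat.lt_or_ge m (n + 1) with hlt | hge
      · exact ih m (by omega)
      · obtain rfl : m = n + 1 := by omega
        have e := congrArg (PowerSeries.coeff n) h
        rw [coeff_PD, PowerSeries.coeff_mul, Finset.sum_eq_zero] at e
        · have : ((n : ℚ) + 1) ≠ 0 := by positivity
          simpa [this] using e
        · intro x hx
          rw [ih x.2 (by have := Finset.HasAntidiagonal.mem_antidiagonal.mp hx; omega), mul_zero]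
  ext n
  simpa using this n n le_rfl

theorem two_ne : (PowerSeries.C (2 : ℚ)) * PowerSeries.C (1 / 2) = 1 := by
  rw [← map_mul]; norm_num

theorem PD_YY : PD YY = PowerSeries.C (1 / 2 : ℚ) * (1 + YY ^ 2) := by
  rw [← YY_ode, PowerSeries.smul_eq_C_mul, ← mul_assoc, mul_comm (PowerSeries.C (1 / 2 : ℚ)),
    two_ne, one_mul]

theorem PD_YB : PD YB = - (PowerSeries.C (1 / 2 : ℚ) * (1 + YB ^ 2)) := by
  rw [← mul_neg, ← YB_ode, PowerSeries.smul_eq_C_mul, ← mul_assoc,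
    mul_comm (PowerSeries.C (1 / 2 : ℚ)), two_ne, one_mul]

theorem YY_mul_YB : YY * YB = 1 := by
  have h : YY * YB - 1 = 0 := by
    apply lin_ode_zero _ (PowerSeries.C (1 / 2 : ℚ) * (YY - YB))
    · rw [map_sub, PD_one, PD_mul, PD_YY, PD_YB]; ring
    · rw [map_sub, PowerSeries.coeff_mul]; simp [YY, YB, A]
  linear_combination h

noncomputable def TT : PowerSeries ℚ := (1 / 2 : ℚ) • (YY - YB)
noncomputable def SS : PowerSeries ℚ := (1 / 2 : ℚ) • (YY + YB)

theorem PD_TT : PD TT = 1 + TT ^ 2 := by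
  rw [TT, map_smul, map_sub, PD_YY, PD_YB]
  simp only [PowerSeries.smul_eq_C_mul]
  have h := two_ne
  have h4 : PowerSeries.C (2 : ℚ) = 2 := map_ofNat _ 2
  rw [h4] at h
  set q := PowerSeries.C (1 / 2 : ℚ)
  linear_combination (2 * q ^ 2) * YY_mul_YB + (2 * q + 1) * h

theorem PD_SS : PD SS = TT * SS := by
  rw [TT, SS, map_smul, map_add, PD_YY, PD_YB]
  simp only [PowerSeries.smul_eq_C_mul]
  ring

theorem SS_sq : SS ^ 2 = PD TT := by
  rw [PD_TT, TT, SS]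
  simp only [PowerSeries.smul_eq_C_mul]
  have h := two_ne
  have h4 : PowerSeries.C (2 : ℚ) = 2 := map_ofNat _ 2
  rw [h4] at h
  set q := PowerSeries.C (1 / 2 : ℚ)
  linear_combination (4 * q ^ 2) * YY_mul_YB + (2 * q + 1) * h

theorem TT0 : PowerSeries.coeff 0 TT = 0 := by
  rw [TT, map_smul, map_sub]; simp [YY, YB]
theorem SS0 : PowerSeries.coeff 0 SS = 1 := by
  rw [SS, map_smul, map_add, YY, YB, PowerSeries.coeff_mk, PowerSeries.coeff_mk]
  simp [A]; norm_num

theorem K_one (l : ℕ) : K 1 l = l.factorial := by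
  have h := K_eq_umbral SS 0 (fun j => by
    have : ((2 * j).factorial : ℚ) ≠ 0 := by positivity
    rw [SS, map_smul, map_add, YY, YB, PowerSeries.coeff_mk, PowerSeries.coeff_mk, smul_eq_mul,
      pow_mul, zero_add]
    field_simp
    norm_num
    ring) l 0
  have d := diag 1 TT SS PD_TT (by rw [one_smul, PD_SS]) TT0 SS0 l
  norm_num at h d
  rw [d] at h
  exact_mod_cast h

theorem K_two (l : ℕ) : K 2 l = 2 ^ l * l.factorial := by
  have h := K_eq_umbral (SS ^ 2) 1 (fun j => by
    have : ((2 * j).factorial : ℚ) ≠ 0 := by positivity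
    rw [SS_sq, coeff_PD, TT, map_smul, map_sub, YY, YB, PowerSeries.coeff_mk,
      PowerSeries.coeff_mk, smul_eq_mul, pow_succ, pow_mul, Nat.factorial_succ, add_comm 1]
    have h2 : (2 * (j : ℚ) + 1) ≠ 0 := by positivity
    push_cast
    field_simp
    norm_num
    ring) l 0
  have d := diag 2 TT (SS ^ 2) PD_TT (by
    rw [PD_pow, PD_SS, PowerSeries.smul_eq_C_mul, PowerSeries.smul_eq_C_mul]
    norm_num
    ring) TT0 (by have := SS0; simp at this; simp [this]) l
  norm_num at h d
  rw [d] at h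
  exact_mod_cast h

theorem K_zero (l : ℕ) : K 0 (l + 2) = 0 := by
  rw [K]
  norm_num
  rw [K_two, K_two, Nat.factorial_succ]
  push_cast
  ring

theorem K_neg_one (l : ℕ) : K (-1) (l + 2) = 0 := by
  rw [K]
  norm_num
  rw [K_one, K_one, Nat.factorial_succ]
  push_cast
  ring

/-- For `n ≤ −1` and `l > −n`, `K n l = 0`. -/
theorem K_eq_zero_of_lt (n : ℤ) (hn : n ≤ -1) (l : ℕ) (hl : (l : ℤ) > -n) :
    K n l = 0 := by
  induction l using Nat.strong_induction_on generalizing n with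
  | _ l ih =>
    obtain ⟨m, rfl⟩ : ∃ m, l = m + 2 := ⟨l - 2, by omega⟩
    rcases eq_or_ne n (-1) with rfl | h1
    · exact K_neg_one m
    rcases eq_or_ne n (-2) with rfl | h2
    · obtain ⟨r, rfl⟩ : ∃ r, m = r + 1 := ⟨m - 1, by push_cast at hl; omega⟩
      rw [K]
      norm_num
      exact K_zero r
    · push_cast at hl
      rw [K, ih (m + 1) (by omega) (n + 2) (by omega) (by push_cast; omega),
        ih m (by omega) (n + 2) (by omega) (by omega)]
      simp
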